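/- arXiv:1709.00748 — 2 statements merged into one kernel-verified Lean document; each statement's English description precedes it below -/
import Mathlib

section
/- Let n ≥ 2, k ≥ 1, let η ∈ ℝⁿ ∖ {0} and 𝐫 = (r₁,…,r_k) ∈ (0,∞)^k, and let F : (ℝⁿ)^k × ℝⁿ → ℂ be a Schwartz function of the variables (ξ₁,…,ξ_k,η). Then ∫_{Γ_{r₁}(η)} ⋯ ∫_{Γ_{r_k}(η)} |F(ξ₁,…,ξ_k,η)|² dσ_{r₁η}(ξ₁)⋯dσ_{r_kη}(ξ_k) ≤ C ∑ ∫_{ℝⁿ}⋯∫_{ℝⁿ} |∂_{ξ₁}^{α₁}⋯∂_{ξ_k}^{α_k} F(ξ₁,…,ξ_k,η)|² dξ₁⋯dξ_k, where the sum is over all tuples of multi-indices (α₁,…,α_k) with 0 ≤ |α_i| ≤ 1 for each i, and the constant C depends only on n and k (in particular it is independent of η and of 𝐫). -/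
open MeasureTheory
open scoped ENNReal

noncomputable section

abbrev Euc (n : ℕ) := EuclideanSpace ℝ (Fin n)

/-- The Ewald sphere measure `σ_{rη}`: the `(n-1)`-dimensional Hausdorff measure restricted
to `Γ_r(η) = {ξ : |ξ - η/2| = r|η|/2}`. -/
def ewaldM (n : ℕ) (r : ℝ) (η : Euc n) : Measure (Euc n) :=
  (MeasureTheory.Measure.hausdorffMeasure ((n : ℝ) - 1)).restrict
    (Metric.sphere ((2 : ℝ)⁻¹ • η) (r * ‖η‖ / 2))

/-- Iterated directional derivative along a list of directions. -/
def dirDerivList {V : Type*} [NormedAddCommGroup V] [NormedSpace ℝ V]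
    (vs : List V) (F : V → ℂ) : V → ℂ :=
  vs.foldr (fun v G x => fderiv ℝ G x v) F

/-- To a choice `a : Fin k → Option (Fin n)` (for each slot `i`, either no derivative or a
single partial derivative in the `m`-th coordinate of `ξᵢ`) we associate the corresponding
list of directions in `(ℝⁿ)ᵏ × ℝⁿ`. -/
def dirsOf (n k : ℕ) (a : Fin k → Option (Fin n)) :
    List ((Fin k → Euc n) × Euc n) :=
  (List.finRange k).filterMap fun i =>
    (a i).map fun m => (Pi.single i (EuclideanSpace.single m (1 : ℝ)), 0)

lemma trace_line (h h' : ℝ → ℂ) (hd : ∀ t, HasDerivAt h (h' t) t) (hc : Continuous h') (t0 : ℝ) :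
    (‖h t0‖₊ : ℝ≥0∞) ^ 2 ≤ ∫⁻ t, ((‖h t‖₊ : ℝ≥0∞) ^ 2 + (‖h' t‖₊ : ℝ≥0∞) ^ 2) := by
  by_cases htop : ∫⁻ t, ((‖h t‖₊ : ℝ≥0∞) ^ 2 + (‖h' t‖₊ : ℝ≥0∞) ^ 2) = ⊤
  · rw [htop]; exact le_top
  have hch : Continuous h := continuous_iff_continuousAt.2 fun t => (hd t).continuousAt
  have hu : ∀ t, HasDerivAt (fun t => h t ^ 2) (2 * h t * h' t) t := by
    intro t
    convert! (hd t).pow 2 using 1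
    simp
  have b2 : ∀ t, ‖2 * h t * h' t‖ₑ ≤ (‖h t‖₊ : ℝ≥0∞) ^ 2 + (‖h' t‖₊ : ℝ≥0∞) ^ 2 := by
    intro t
    rw [enorm_eq_nnnorm]
    norm_cast
    rw [← NNReal.coe_le_coe]
    push_cast
    rw [norm_mul, norm_mul]
    have : ‖(2:ℂ)‖ = 2 := by simp
    rw [this]
    nlinarith [sq_nonneg (‖h t‖ - ‖h' t‖)]
  have i1 : Integrable (fun t => h t ^ 2) := by
    refine ⟨(hch.pow 2).aestronglyMeasurable, ?_⟩
    refine lt_of_le_of_lt (lintegral_mono fun t => ?_) (lt_top_iff_ne_top.2 htop)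
    rw [enorm_pow, enorm_eq_nnnorm]
    exact le_self_add
  have i2 : Integrable (fun t => 2 * h t * h' t) := by
    refine ⟨((continuous_const.mul hch).mul hc).aestronglyMeasurable, ?_⟩
    exact lt_of_le_of_lt (lintegral_mono b2) (lt_top_iff_ne_top.2 htop)
  have ht := tendsto_zero_of_hasDerivAt_of_integrableOn_Iic (a := t0) (fun x _ => hu x)
    i2.integrableOn i1.integrableOn
  have := integral_Iic_of_hasDerivAt_of_tendsto' (a := t0) (fun x _ => hu x) i2.integrableOn ht
  rw [sub_zero] at this
  calc (‖h t0‖₊ : ℝ≥0∞) ^ 2 = ‖h t0 ^ 2‖ₑ := by rw [enorm_pow, enorm_eq_nnnorm]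
    _ = ‖∫ x in Set.Iic t0, 2 * h x * h' x‖ₑ := by rw [this]
    _ ≤ ∫⁻ x in Set.Iic t0, ‖2 * h x * h' x‖ₑ := enorm_integral_le_lintegral_enorm _
    _ ≤ ∫⁻ x, ‖2 * h x * h' x‖ₑ := setLIntegral_le_lintegral _ _
    _ ≤ _ := lintegral_mono b2

def prj (d : ℕ) (m : Fin (d+1)) (x : Euc (d+1)) : Fin d → ℝ := fun j => x (m.succAbove j)

lemma prj_cont (d : ℕ) (m : Fin (d+1)) : Continuous (prj d m) := by
  unfold prj; fun_prop

/-- the vector with `m`-th coordinate `t` and other coordinates `x`. -/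
def ins (d : ℕ) (m : Fin (d+1)) (t : ℝ) (x : Fin d → ℝ) : Euc (d+1) :=
  WithLp.toLp 2 (m.insertNth t x : Fin (d+1) → ℝ)

lemma ins_prj (d : ℕ) (m : Fin (d+1)) (x : Euc (d+1)) : ins d m (x m) (prj d m x) = x := by
  ext j
  refine Fin.succAboveCases m ?_ (fun j => ?_) j <;> simp [ins, prj]

lemma ins_eq (d : ℕ) (m : Fin (d+1)) (t : ℝ) (x : Fin d → ℝ) :
    ins d m t x = ins d m 0 x + t • EuclideanSpace.single m (1 : ℝ) := by
  ext j
  refine Fin.succAboveCases m ?_ (fun j => ?_) j <;> simp [ins]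

lemma lintegral_ins (d : ℕ) (m : Fin (d+1)) (G : Euc (d+1) → ℝ≥0∞) (hG : Measurable G) :
    ∫⁻ y, G y = ∫⁻ x : Fin d → ℝ, ∫⁻ t : ℝ, G (ins d m t x) := by
  rw [← (PiLp.volume_preserving_toLp (Fin (d+1))).lintegral_comp hG]
  have := (volume_preserving_piFinSuccAbove (fun _ : Fin (d+1) => ℝ) m).symm
  have hG' : Measurable fun y : Fin (d+1) → ℝ => G (WithLp.toLp 2 y) :=
    hG.comp (PiLp.volume_preserving_toLp (Fin (d+1))).measurable
  rw [← this.lintegral_comp hG', Measure.volume_eq_prod, lintegral_prod_symm']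
  · rfl
  · exact hG'.comp this.measurable

def piece (d : ℕ) (c : Euc (d+1)) (ρ : ℝ) (m : Fin (d+1)) (s : ℝ) : Set (Euc (d+1)) :=
  {x | x ∈ Metric.sphere c ρ ∧ ρ / (d+1) ≤ s * (x m - c m)}

lemma piece_cover (d : ℕ) (c : Euc (d+1)) (ρ : ℝ) (hρ : 0 < ρ) :
    Metric.sphere c ρ ⊆ ⋃ m, (piece d c ρ m 1 ∪ piece d c ρ m (-1)) := by
  intro x hx
  by_contra hcon
  simp only [Set.mem_iUnion, not_exists, Set.mem_union, piece, Set.mem_ofPred_eq, not_or, not_and,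
    not_le] at hcon
  have h1 : ∀ m, (x m - c m)^2 < (ρ / (d+1))^2 := by
    intro m
    have := (hcon m).1 hx
    have := (hcon m).2 hx
    apply sq_lt_sq'  <;> linarith
  have h2 : ρ^2 = ∑ m, (x m - c m)^2 := by
    rw [Metric.mem_sphere, dist_eq_norm] at hx
    rw [← hx, EuclideanSpace.real_norm_sq_eq]
    simp
  have h3 : ∑ m, (x m - c m)^2 < ∑ m : Fin (d+1), (ρ / (d+1))^2 :=
    Finset.sum_lt_sum_of_nonempty Finset.univ_nonempty (fun m _ => h1 m)
  rw [← h2] at h3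
  simp only [Finset.sum_const, Finset.card_univ, Fintype.card_fin, nsmul_eq_mul] at h3
  push_cast at h3
  have hd : (0:ℝ) ≤ d := by positivity
  have : ((d:ℝ)+1) * (ρ / (d+1))^2 = ρ^2/(d+1) := by field_simp
  rw [this, lt_div_iff₀ (by positivity)] at h3
  nlinarith [mul_nonneg hd (sq_nonneg ρ)]

lemma piece_anti (d : ℕ) (c : Euc (d+1)) (ρ : ℝ) (hρ : 0 < ρ) (m : Fin (d+1)) (s : ℝ)
    (hs : s = 1 ∨ s = -1) (x y : Euc (d+1)) (hx : x ∈ piece d c ρ m s) (hy : y ∈ piece d c ρ m s) :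
    dist x y ≤ (d + d * (d+1) : ℝ) * dist (prj d m x) (prj d m y) := by
  obtain ⟨hx1, hx2⟩ := hx
  obtain ⟨hy1, hy2⟩ := hy
  set D := dist (prj d m x) (prj d m y) with hD
  have hD0 : 0 ≤ D := dist_nonneg
  have hj : ∀ j : Fin d, |x (m.succAbove j) - y (m.succAbove j)| ≤ D := by
    intro j
    have := dist_le_pi_dist (prj d m x) (prj d m y) j
    simpa [prj, Real.dist_eq] using this
  have key : ∀ z : Euc (d+1), z ∈ Metric.sphere c ρ →
      ρ^2 = (z m - c m)^2 + ∑ j : Fin d, (z (m.succAbove j) - c (m.succAbove j))^2 := by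
    intro z hz
    rw [Metric.mem_sphere, dist_eq_norm] at hz
    rw [← hz, EuclideanSpace.real_norm_sq_eq, Fin.sum_univ_succAbove _ m]
    simp
  have kx := key x hx1
  have ky := key y hy1
  have hle : ∀ z : Euc (d+1), z ∈ Metric.sphere c ρ → ∀ j, |z j - c j| ≤ ρ := by
    intro z hz j
    rw [Metric.mem_sphere, dist_eq_norm] at hz
    rw [← hz]
    simpa using PiLp.norm_apply_le (z - c) j
  have e1 : (x m - y m) * ((x m - c m) + (y m - c m)) =
      ∑ j : Fin d, (y (m.succAbove j) - x (m.succAbove j)) *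
        ((x (m.succAbove j) - c (m.succAbove j)) + (y (m.succAbove j) - c (m.succAbove j))) := by
    have : ∀ j : Fin d, (y (m.succAbove j) - x (m.succAbove j)) *
        ((x (m.succAbove j) - c (m.succAbove j)) + (y (m.succAbove j) - c (m.succAbove j))) =
        (y (m.succAbove j) - c (m.succAbove j))^2 - (x (m.succAbove j) - c (m.succAbove j))^2 := by
      intro j; ring
    simp only [this, Finset.sum_sub_distrib]
    nlinarith
  have e2 : |x m - y m| * |(x m - c m) + (y m - c m)| ≤ d * (D * (2 * ρ)) := by
    rw [← abs_mul, e1]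
    refine (Finset.abs_sum_le_sum_abs _ _).trans ?_
    calc _ ≤ ∑ j : Fin d, (D * (2 * ρ)) := by
          refine Finset.sum_le_sum fun j _ => ?_
          rw [abs_mul, abs_sub_comm]
          refine mul_le_mul (hj j) ?_ (abs_nonneg _) hD0
          refine (abs_add_le _ _).trans ?_
          linarith [hle x hx1 (m.succAbove j), hle y hy1 (m.succAbove j)]
      _ = _ := by simp
  have e3 : 2 * (ρ / (d+1)) ≤ |(x m - c m) + (y m - c m)| := by
    rcases hs with rfl | rfl
    · refine le_trans ?_ (le_abs_self _); linarith
    · refine le_trans ?_ (neg_le_abs _); linarith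
  have e4 : |x m - y m| ≤ d * (d+1) * D := by
    have h5 : |x m - y m| * (2 * (ρ / (d+1))) ≤ d * (D * (2 * ρ)) :=
      (mul_le_mul_of_nonneg_left e3 (abs_nonneg _)).trans e2
    have h6 : |x m - y m| * (2 * (ρ / (d+1))) = (|x m - y m| / (d+1)) * (2 * ρ) := by
      field_simp
    rw [h6] at h5
    have h8 : (|x m - y m| / (d+1)) * (2 * ρ) ≤ (d * D) * (2 * ρ) := by linarith
    have h7 := le_of_mul_le_mul_right h8 (by positivity)
    rw [div_le_iff₀ (by positivity)] at h7
    linarith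
  have e5 : dist x y ≤ ∑ j, |x j - y j| := by
    rw [EuclideanSpace.dist_eq]
    refine Real.sqrt_le_iff.2 ⟨by positivity, ?_⟩
    simp only [Real.dist_eq]
    exact Finset.sum_sq_le_sq_sum_of_nonneg (fun i _ => abs_nonneg _)
  refine e5.trans ?_
  rw [Fin.sum_univ_succAbove _ m]
  have : ∑ j : Fin d, |x (m.succAbove j) - y (m.succAbove j)| ≤ d * D := by
    refine (Finset.sum_le_sum fun j _ => hj j).trans ?_
    simp
  linarith

def LL (d : ℕ) : NNReal := (d + d * (d+1) : NNReal)

lemma piece_meas (d : ℕ) (c : Euc (d+1)) (ρ : ℝ) (hρ : 0 < ρ) (m : Fin (d+1)) (s : ℝ)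
    (hs : s = 1 ∨ s = -1) (A : Set (Fin d → ℝ)) :
    Measure.hausdorffMeasure (d:ℝ) (prj d m ⁻¹' A ∩ piece d c ρ m s) ≤
      (LL d : ℝ≥0∞) ^ d * volume A := by
  set T := prj d m ⁻¹' A ∩ piece d c ρ m s
  have ha : AntilipschitzWith (LL d) (fun x : T => prj d m x) := by
    refine AntilipschitzWith.of_le_mul_dist fun x y => ?_
    have := piece_anti d c ρ hρ m s hs x y x.2.2 y.2.2
    rw [Subtype.dist_eq]
    simpa [LL] using this
  have h1 := ha.le_hausdorffMeasure_image (d := (d:ℝ)) (by positivity) Set.univ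
  have h2 := (isometry_subtype_coe (s := T)).hausdorffMeasure_image (d := (d:ℝ))
    (Or.inl (by positivity)) Set.univ
  rw [Set.image_univ, Subtype.range_coe] at h2
  rw [h2]
  refine h1.trans ?_
  rw [ENNReal.rpow_natCast]
  gcongr
  have h3 := hausdorffMeasure_pi_real (ι := Fin d)
  rw [Fintype.card_fin] at h3
  rw [h3]
  rintro _ ⟨x, -, rfl⟩
  exact x.2.1

lemma piece_bound (d : ℕ) (c : Euc (d+1)) (ρ : ℝ) (hρ : 0 < ρ) (m : Fin (d+1)) (s : ℝ)
    (hs : s = 1 ∨ s = -1) (g : Euc (d+1) → ℂ) (hg : ContDiff ℝ 1 g) :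
    ∫⁻ y in piece d c ρ m s, (‖g y‖₊ : ℝ≥0∞)^2 ∂(Measure.hausdorffMeasure (d:ℝ)) ≤
      (LL d : ℝ≥0∞) ^ d * ((∫⁻ y, (‖g y‖₊ : ℝ≥0∞)^2) +
        ∫⁻ y, (‖fderiv ℝ g y (EuclideanSpace.single m 1)‖₊ : ℝ≥0∞)^2) := by
  set g' : Euc (d+1) → ℂ := fun y => fderiv ℝ g y (EuclideanSpace.single m 1) with hg'
  have cg : Continuous g := hg.continuous
  have cg' : Continuous g' := (hg.continuous_fderiv one_ne_zero).clm_apply continuous_const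
  set G : Euc (d+1) → ℝ≥0∞ := fun y => (‖g y‖₊ : ℝ≥0∞)^2 + (‖g' y‖₊ : ℝ≥0∞)^2 with hG
  have mG : Measurable G := by
    have := cg.measurable
    have := cg'.measurable
    fun_prop
  have cins : Continuous fun p : (Fin d → ℝ) × ℝ => ins d m p.2 p.1 := by
    unfold ins
    refine (PiLp.continuous_toLp 2 _).comp ?_
    exact Continuous.finInsertNth m continuous_snd continuous_fst
  set h : (Fin d → ℝ) → ℝ≥0∞ := fun x => ∫⁻ t, G (ins d m t x) with hh
  have mh : Measurable h := by
    have : Measurable fun p : (Fin d → ℝ) × ℝ => G (ins d m p.2 p.1) := mG.comp cins.measurable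
    exact this.lintegral_prod_right'
  have hpt : ∀ y, (‖g y‖₊ : ℝ≥0∞)^2 ≤ h (prj d m y) := by
    intro y
    have hd : ∀ t, HasDerivAt (fun t => g (ins d m t (prj d m y))) (g' (ins d m t (prj d m y))) t := by
      intro t
      have e : HasDerivAt (fun t => ins d m t (prj d m y)) (EuclideanSpace.single m (1:ℝ)) t := by
        have : (fun t => ins d m t (prj d m y)) =
            fun t => ins d m 0 (prj d m y) + t • EuclideanSpace.single m (1 : ℝ) :=
          funext fun t => ins_eq _ _ _ _
        rw [this]
        simpa using ((hasDerivAt_id t).smul_const (EuclideanSpace.single m (1:ℝ))).const_add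
          (ins d m 0 (prj d m y))
      exact ((hg.differentiable one_ne_zero _).hasFDerivAt).comp_hasDerivAt t e
    have := trace_line _ _ hd (cg'.comp (cins.comp (Continuous.prodMk continuous_const continuous_id)))
      (y m)
    rw [ins_prj] at this
    exact this
  have hmap : Measure.map (prj d m) ((Measure.hausdorffMeasure (d:ℝ)).restrict (piece d c ρ m s))
      ≤ ((LL d : ℝ≥0∞) ^ d) • (volume : Measure (Fin d → ℝ)) := by
    refine Measure.le_iff.2 fun A hA => ?_
    rw [Measure.map_apply (prj_cont d m).measurable hA,
      Measure.restrict_apply ((prj_cont d m).measurable hA)]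
    exact piece_meas d c ρ hρ m s hs A
  calc _ ≤ ∫⁻ y in piece d c ρ m s, h (prj d m y) ∂(Measure.hausdorffMeasure (d:ℝ)) :=
        lintegral_mono hpt
    _ = ∫⁻ x, h x ∂(Measure.map (prj d m) ((Measure.hausdorffMeasure (d:ℝ)).restrict
          (piece d c ρ m s))) := (lintegral_map mh (prj_cont d m).measurable).symm
    _ ≤ ∫⁻ x, h x ∂(((LL d : ℝ≥0∞) ^ d) • (volume : Measure (Fin d → ℝ))) :=
        lintegral_mono' hmap le_rfl
    _ = (LL d : ℝ≥0∞) ^ d * ∫⁻ x, h x := lintegral_smul_measure _ _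
    _ = (LL d : ℝ≥0∞) ^ d * ∫⁻ y, G y := by rw [lintegral_ins d m G mG]
    _ = _ := by
        rw [lintegral_add_left]
        have := cg.measurable
        fun_prop

def derOpt {n : ℕ} (g : Euc n → ℂ) (b : Option (Fin n)) : Euc n → ℂ :=
  match b with
  | none => g
  | some m => fun y => fderiv ℝ g y (EuclideanSpace.single m 1)

lemma ewald_eq (d : ℕ) (r : ℝ) (η : Euc (d+1)) : ewaldM (d+1) r η =
    (Measure.hausdorffMeasure (d:ℝ)).restrict
      (Metric.sphere ((2 : ℝ)⁻¹ • η) (r * ‖η‖ / 2)) := by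
  unfold ewaldM
  congr 2
  push_cast; ring

lemma slot (d : ℕ) (r : ℝ) (hr : 0 < r) (η : Euc (d+1)) (hη : η ≠ 0) (g : Euc (d+1) → ℂ)
    (hg : ContDiff ℝ 1 g) :
    ∫⁻ y, (‖g y‖₊ : ℝ≥0∞)^2 ∂(ewaldM (d+1) r η) ≤
      ((d + 1) * (2 * (LL d : ℝ≥0∞) ^ d)) *
        ∑ b : Option (Fin (d+1)), ∫⁻ y, (‖derOpt g b y‖₊ : ℝ≥0∞)^2 := by
  have hρ : 0 < r * ‖η‖ / 2 := by have := norm_pos_iff.2 hη; positivity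
  rw [ewald_eq]
  set c := (2 : ℝ)⁻¹ • η
  set ρ := r * ‖η‖ / 2
  set T := ∑ b : Option (Fin (d+1)), ∫⁻ y, (‖derOpt g b y‖₊ : ℝ≥0∞)^2 with hT
  have hp : ∀ m s, (s = 1 ∨ s = -1) → ∫⁻ y in piece d c ρ m s, (‖g y‖₊ : ℝ≥0∞)^2
      ∂(Measure.hausdorffMeasure (d:ℝ)) ≤ (LL d : ℝ≥0∞) ^ d * T := by
    intro m s hs
    refine (piece_bound d c ρ hρ m s hs g hg).trans ?_
    gcongr
    rw [hT, Fintype.sum_option]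
    refine add_le_add le_rfl ?_
    · exact Finset.single_le_sum (f := fun m => ∫⁻ y, (‖derOpt g (some m) y‖₊ : ℝ≥0∞)^2)
        (fun _ _ => zero_le) (Finset.mem_univ m)
  calc _ ≤ ∫⁻ y in ⋃ m, (piece d c ρ m 1 ∪ piece d c ρ m (-1)), (‖g y‖₊ : ℝ≥0∞)^2
        ∂(Measure.hausdorffMeasure (d:ℝ)) := lintegral_mono_set (piece_cover d c ρ hρ)
    _ ≤ ∑' m, ∫⁻ y in (piece d c ρ m 1 ∪ piece d c ρ m (-1)), (‖g y‖₊ : ℝ≥0∞)^2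
        ∂(Measure.hausdorffMeasure (d:ℝ)) := lintegral_iUnion_le _ _
    _ = ∑ m, ∫⁻ y in (piece d c ρ m 1 ∪ piece d c ρ m (-1)), (‖g y‖₊ : ℝ≥0∞)^2
        ∂(Measure.hausdorffMeasure (d:ℝ)) := tsum_fintype _
    _ ≤ ∑ m : Fin (d+1), 2 * ((LL d : ℝ≥0∞) ^ d * T) := by
        refine Finset.sum_le_sum fun m _ => (lintegral_union_le _ _ _).trans ?_
        rw [two_mul]
        exact add_le_add (hp m 1 (Or.inl rfl)) (hp m (-1) (Or.inr rfl))
    _ = _ := by simp; ring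

lemma ewald_fin (d : ℕ) (r : ℝ) (hr : 0 < r) (η : Euc (d+1)) (hη : η ≠ 0) :
    IsFiniteMeasure (ewaldM (d+1) r η) := by
  have hρ : 0 < r * ‖η‖ / 2 := by have := norm_pos_iff.2 hη; positivity
  rw [ewald_eq]
  set c := (2 : ℝ)⁻¹ • η
  set ρ := r * ‖η‖ / 2
  refine ⟨?_⟩
  rw [Measure.restrict_apply_univ]
  refine lt_of_le_of_lt (measure_mono (piece_cover d c ρ hρ)) ?_
  refine lt_of_le_of_lt (measure_iUnion_le _) ?_
  rw [tsum_fintype]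
  refine ENNReal.sum_lt_top.2 fun m _ => ?_
  have hp : ∀ s, (s = 1 ∨ s = -1) →
      Measure.hausdorffMeasure (d:ℝ) (piece d c ρ m s) < ⊤ := by
    intro s hs
    have hb : IsCompact (prj d m '' Metric.sphere c ρ) :=
      (isCompact_sphere c ρ).image (prj_cont d m)
    have h := piece_meas d c ρ hρ m s hs (prj d m '' Metric.sphere c ρ)
    rw [Set.inter_eq_self_of_subset_right] at h
    · exact lt_of_le_of_lt h (ENNReal.mul_lt_top (ENNReal.pow_lt_top ENNReal.coe_lt_top)
        hb.measure_lt_top)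
    · exact fun x hx => ⟨x, hx.1, rfl⟩
  exact lt_of_le_of_lt (measure_union_le _ _)
    (ENNReal.add_lt_top.2 ⟨hp 1 (Or.inl rfl), hp (-1) (Or.inr rfl)⟩)

def derK {n k : ℕ} (i : Fin k) (b : Option (Fin n)) (G : (Fin k → Euc n) × Euc n → ℂ) :
    (Fin k → Euc n) × Euc n → ℂ :=
  match b with
  | none => G
  | some m => fun x => fderiv ℝ G x (Pi.single i (EuclideanSpace.single m (1 : ℝ)), 0)

lemma derK_smooth {n k : ℕ} (i : Fin k) (b : Option (Fin n)) (G : (Fin k → Euc n) × Euc n → ℂ)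
    (hG : ContDiff ℝ (⊤ : ℕ∞) G) : ContDiff ℝ (⊤ : ℕ∞) (derK i b G) := by
  cases b with
  | none => exact hG
  | some m =>
    have : ContDiff ℝ (⊤ : ℕ∞) (fderiv ℝ G) := hG.fderiv_right (by simp)
    exact this.clm_apply contDiff_const

lemma fub {k n : ℕ} (i : Fin (k+1)) (μ : Fin (k+1) → Measure (Euc n)) [∀ j, SigmaFinite (μ j)]
    (ν : Measure (Euc n)) [SigmaFinite ν] (f : (Fin (k+1) → Euc n) → ℝ≥0∞) (hf : Measurable f) :
    ∫⁻ ξ, f ξ ∂(Measure.pi (Function.update μ i ν)) =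
      ∫⁻ x, ∫⁻ y, f (i.insertNth y x) ∂ν ∂(Measure.pi fun j => μ (i.succAbove j)) := by
  have : ∀ j, SigmaFinite (Function.update μ i ν j) := by
    intro j
    by_cases h : j = i
    · subst h; simpa
    · simpa [h] using inferInstanceAs (SigmaFinite (μ j))
  have h := (measurePreserving_piFinSuccAbove (Function.update μ i ν) i).symm
  rw [← h.lintegral_comp hf]
  simp only [Function.update_self, ne_eq, Fin.succAbove_ne, not_false_eq_true,
    Function.update_of_ne]
  rw [lintegral_prod_symm']
  · rfl
  · exact hf.comp (MeasurableEquiv.measurable _)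

lemma slotk {k d : ℕ} (i : Fin (k+1)) (μ : Fin (k+1) → Measure (Euc (d+1)))
    [∀ j, SigmaFinite (μ j)] (r : ℝ) (hr : 0 < r) (η : Euc (d+1)) (hη : η ≠ 0)
    (G : (Fin (k+1) → Euc (d+1)) × Euc (d+1) → ℂ) (hG : ContDiff ℝ (⊤ : ℕ∞) G) :
    ∫⁻ ξ, (‖G (ξ, η)‖₊ : ℝ≥0∞)^2 ∂(Measure.pi (Function.update μ i (ewaldM (d+1) r η))) ≤
      ((d + 1) * (2 * (LL d : ℝ≥0∞) ^ d)) *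
        ∑ b : Option (Fin (d+1)), ∫⁻ ξ, (‖derK i b G (ξ, η)‖₊ : ℝ≥0∞)^2
          ∂(Measure.pi (Function.update μ i volume)) := by
  have := ewald_fin d r hr η hη
  have mb : ∀ b, Measurable fun ξ => (‖derK i b G (ξ, η)‖₊ : ℝ≥0∞)^2 := by
    intro b
    have c := (derK_smooth i b G hG).continuous
    have : Continuous fun ξ => derK i b G (ξ, η) := c.comp (by fun_prop)
    have := this.measurable
    fun_prop
  have m0 : Measurable fun ξ => (‖G (ξ, η)‖₊ : ℝ≥0∞)^2 := mb none
  have cins : Continuous fun p : (Fin k → Euc (d+1)) × Euc (d+1) =>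
      (i.insertNth p.2 p.1 : Fin (k+1) → Euc (d+1)) :=
    Continuous.finInsertNth i continuous_snd continuous_fst
  have mb2 : ∀ b, Measurable fun x : Fin k → Euc (d+1) => ∫⁻ y : Euc (d+1),
      (‖derK i b G (i.insertNth y x, η)‖₊ : ℝ≥0∞)^2 := by
    intro b
    exact ((mb b).comp cins.measurable).lintegral_prod_right'
  rw [fub i μ _ _ m0]
  have e : ∀ b, ∫⁻ ξ, (‖derK i b G (ξ, η)‖₊ : ℝ≥0∞)^2
          ∂(Measure.pi (Function.update μ i volume)) = _ := fun b => fub i μ volume _ (mb b)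
  simp only [e]
  rw [← lintegral_finsetSum _ (fun b _ => mb2 b), ← lintegral_const_mul _ (by fun_prop)]
  refine lintegral_mono fun x => ?_
  set g : Euc (d+1) → ℂ := fun y => G (i.insertNth y x, η) with hgdef
  have hupd : ∀ y, HasFDerivAt (fun y : Euc (d+1) => ((i.insertNth y x : Fin (k+1) → Euc (d+1)), η))
      ((ContinuousLinearMap.pi (Pi.single i (.id ℝ (Euc (d+1))))).prod 0) y := by
    intro y
    have h1 := hasFDerivAt_update (𝕜 := ℝ) (i.insertNth (0 : Euc (d+1)) x : Fin (k+1) → Euc (d+1))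
      (i := i) y
    have h2 : (Function.update (i.insertNth (0 : Euc (d+1)) x : Fin (k+1) → Euc (d+1)) i) =
        fun y => (i.insertNth y x : Fin (k+1) → Euc (d+1)) := by
      funext y; exact Fin.update_insertNth _ _ _ _
    rw [h2] at h1
    exact h1.prodMk (hasFDerivAt_const η y)
  have hg : ContDiff ℝ 1 g := by
    refine (hG.of_le (by exact_mod_cast le_top)).comp ?_
    refine ContDiff.prodMk ?_ contDiff_const
    refine contDiff_pi.2 fun j => ?_
    refine Fin.succAboveCases i ?_ (fun j => ?_) j
    · simpa using! contDiff_id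
    · simpa using contDiff_const
  refine (slot d r hr η hη g hg).trans (le_of_eq ?_)
  congr 1
  refine Finset.sum_congr rfl fun b _ => lintegral_congr fun y => ?_
  cases b with
  | none => rfl
  | some m =>
    have hd : fderiv ℝ g y = _ := (((hG.differentiable (by simp) _).hasFDerivAt).comp y (hupd y)).fderiv
    have hv : (ContinuousLinearMap.pi (Pi.single i (.id ℝ (Euc (d+1))))).prod
        (0 : Euc (d+1) →L[ℝ] Euc (d+1)) (EuclideanSpace.single m (1:ℝ)) =
        ((Pi.single i (EuclideanSpace.single m (1:ℝ)) : Fin (k+1) → Euc (d+1)), 0) := by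
      refine Prod.ext ?_ rfl
      funext j
      by_cases h : j = i
      · subst h; simp
      · simp [h]
    simp only [derOpt, derK, hd]
    rw [ContinuousLinearMap.comp_apply, hv]

def dirsL (n k : ℕ) (l : List (Fin k)) (a : Fin k → Option (Fin n)) :
    List ((Fin k → Euc n) × Euc n) :=
  l.filterMap fun i =>
    (a i).map fun m => (Pi.single i (EuclideanSpace.single m (1 : ℝ)), 0)

lemma dirsL_cons (n k : ℕ) (i : Fin k) (l : List (Fin k)) (a : Fin k → Option (Fin n))
    (G : (Fin k → Euc n) × Euc n → ℂ) :
    dirDerivList (dirsL n k (i :: l) a) G = derK i (a i) (dirDerivList (dirsL n k l a) G) := by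
  unfold dirsL
  rw [List.filterMap_cons]
  cases h : a i with
  | none => simp [derK]
  | some m => simp [derK, dirDerivList]

lemma dirsL_smooth (n k : ℕ) (l : List (Fin k)) (a : Fin k → Option (Fin n))
    (G : (Fin k → Euc n) × Euc n → ℂ) (hG : ContDiff ℝ (⊤ : ℕ∞) G) :
    ContDiff ℝ (⊤ : ℕ∞) (dirDerivList (dirsL n k l a) G) := by
  induction l with
  | nil => simpa [dirsL, dirDerivList] using hG
  | cons i l ih => rw [dirsL_cons]; exact derK_smooth _ _ _ ih

lemma dirsL_congr (n k : ℕ) (l : List (Fin k)) (a a' : Fin k → Option (Fin n))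
    (h : ∀ i ∈ l, a i = a' i) : dirsL n k l a = dirsL n k l a' := by
  unfold dirsL
  refine List.filterMap_congr fun i hi => ?_
  rw [h i hi]

def mixM {n k : ℕ} (r : Fin k → ℝ) (η : Euc n) (l : List (Fin k)) (i : Fin k) : Measure (Euc n) :=
  if i ∈ l then volume else ewaldM n (r i) η

lemma iter {k d : ℕ} (l : List (Fin (k+1))) (hl : l.Nodup)
    (r : Fin (k+1) → ℝ) (hr : ∀ i, 0 < r i) (η : Euc (d+1)) (hη : η ≠ 0)
    (G : (Fin (k+1) → Euc (d+1)) × Euc (d+1) → ℂ) (hG : ContDiff ℝ (⊤ : ℕ∞) G) :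
    ∫⁻ ξ, (‖G (ξ, η)‖₊ : ℝ≥0∞)^2 ∂(Measure.pi fun i => ewaldM (d+1) (r i) η) ≤
      (((d + 1) * (2 * (LL d : ℝ≥0∞) ^ d)) *
          (Fintype.card (Fin (k+1) → Option (Fin (d+1))) : ℝ≥0∞)) ^ l.length *
        ∑ a : Fin (k+1) → Option (Fin (d+1)),
          ∫⁻ ξ, (‖dirDerivList (dirsL (d+1) (k+1) l a) G (ξ, η)‖₊ : ℝ≥0∞)^2
          ∂(Measure.pi (mixM r η l)) := by
  induction l with
  | nil =>
    have : (mixM r η []) = fun i => ewaldM (d+1) (r i) η := by funext i; simp [mixM]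
    rw [this]
    simp only [List.length_nil, pow_zero, one_mul]
    exact Finset.single_le_sum (f := fun a => ∫⁻ ξ,
        (‖dirDerivList (dirsL (d+1) (k+1) [] a) G (ξ, η)‖₊ : ℝ≥0∞)^2
          ∂(Measure.pi fun i => ewaldM (d+1) (r i) η))
        (fun _ _ => zero_le) (Finset.mem_univ (fun _ => none))
  | cons i l ih =>
    obtain ⟨hil, hl'⟩ := List.nodup_cons.1 hl
    refine (ih hl').trans ?_
    rw [List.length_cons, pow_succ, mul_assoc (_ ^ _)]
    refine mul_le_mul' le_rfl ?_
    have : ∀ j, SigmaFinite (mixM r η l j) := by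
      intro j
      have := ewald_fin d (r j) (hr j) η hη
      unfold mixM
      split_ifs <;> infer_instance
    have e1 : mixM r η l = Function.update (mixM r η l) i (ewaldM (d+1) (r i) η) := by
      symm
      rw [Function.update_eq_self_iff]
      simp [mixM, hil]
    have e2 : mixM r η (i :: l) = Function.update (mixM r η l) i volume := by
      funext j
      by_cases h : j = i
      · subst h; simp [mixM]
      · simp [mixM, h]
    set f : (Fin (k+1) → Option (Fin (d+1))) → ℝ≥0∞ := fun a =>
      ∫⁻ ξ, (‖dirDerivList (dirsL (d+1) (k+1) (i :: l) a) G (ξ, η)‖₊ : ℝ≥0∞)^2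
          ∂(Measure.pi (mixM r η (i :: l))) with hf
    have step : ∀ a, ∫⁻ ξ, (‖dirDerivList (dirsL (d+1) (k+1) l a) G (ξ, η)‖₊ : ℝ≥0∞)^2
          ∂(Measure.pi (mixM r η l)) ≤ ((d + 1) * (2 * (LL d : ℝ≥0∞) ^ d)) * ∑ a, f a := by
      intro a
      rw [e1]
      refine (slotk i (mixM r η l) (r i) (hr i) η hη _ (dirsL_smooth _ _ l a G hG)).trans ?_
      gcongr
      have : ∀ b, ∫⁻ ξ, (‖derK i b (dirDerivList (dirsL (d+1) (k+1) l a) G) (ξ, η)‖₊ : ℝ≥0∞)^2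
          ∂(Measure.pi (Function.update (mixM r η l) i volume)) = f (Function.update a i b) := by
        intro b
        rw [hf]
        simp only
        rw [e2, dirsL_cons, Function.update_self,
          dirsL_congr _ _ l (Function.update a i b) a]
        intro j hj
        rw [Function.update_of_ne]
        rintro rfl
        exact hil hj
      simp only [this]
      rw [← Finset.sum_image (f := f) (g := fun b => Function.update a i b)
        (fun b _ b' _ h => Function.update_injective a i h)]
      exact Finset.sum_le_sum_of_subset (Finset.subset_univ _)
    refine (Finset.sum_le_sum fun a _ => step a).trans (le_of_eq ?_)
    rw [Finset.sum_const, Finset.card_univ, nsmul_eq_mul]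
    ring

/-- the multi-sphere trace estimate. -/
theorem stmt2 (n k : ℕ) (hn : 2 ≤ n) (hk : 1 ≤ k) :
    ∃ C : ℝ, 0 < C ∧
      ∀ (F : SchwartzMap ((Fin k → Euc n) × Euc n) ℂ)
        (η : Euc n), η ≠ 0 → ∀ r : Fin k → ℝ, (∀ i, 0 < r i) →
        (∫⁻ ξ : Fin k → Euc n, (‖F (ξ, η)‖₊ : ℝ≥0∞) ^ 2
            ∂(Measure.pi fun i => ewaldM n (r i) η))
          ≤ ENNReal.ofReal C *
            ∑ a : Fin k → Option (Fin n),
              ∫⁻ ξ : Fin k → Euc n,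
                (‖dirDerivList (dirsOf n k a) (⇑F) (ξ, η)‖₊ : ℝ≥0∞) ^ 2 := by

  obtain ⟨d, rfl⟩ : ∃ d, n = d + 1 := ⟨n - 1, by omega⟩
  obtain ⟨k, rfl⟩ : ∃ k', k = k' + 1 := ⟨k - 1, by omega⟩
  set K : ℝ≥0∞ := (((d + 1) * (2 * (LL d : ℝ≥0∞) ^ d)) *
          (Fintype.card (Fin (k+1) → Option (Fin (d+1))) : ℝ≥0∞)) ^ (List.finRange (k+1)).length
    with hK
  have hKtop : K ≠ ⊤ := by
    rw [hK]
    refine ENNReal.pow_ne_top (ENNReal.mul_ne_top (ENNReal.mul_ne_top ?_ (ENNReal.mul_ne_top ?_ ?_))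
      (ENNReal.natCast_ne_top _))
    · exact_mod_cast ENNReal.natCast_ne_top (d+1)
    · exact ENNReal.ofNat_ne_top
    · exact ENNReal.pow_ne_top ENNReal.coe_ne_top
  refine ⟨K.toReal + 1, by positivity, fun F η hη r hr => ?_⟩
  refine (iter (List.finRange (k+1)) (List.nodup_finRange _) r hr η hη F
    (F.smooth _)).trans ?_
  rw [← hK]
  have hm : mixM r η (List.finRange (k+1)) = fun _ => volume := by
    funext i; simp [mixM]
  rw [hm]
  refine mul_le_mul' ?_ le_rfl
  rw [ENNReal.le_ofReal_iff_toReal_le hKtop (by positivity)]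
  linarith
end
end

section
/- Let n ≥ 1, 1 ≤ p < ∞, α ∈ ℝ, 0 < δ < 1, τ ∈ ℝ, γ > 0 and M > 0. Let {F_r}_{r∈(0,∞)} be a family of locally integrable functions on ℝⁿ such that (r,η) ↦ F_r(η) is measurable and: (1) for almost every η ∈ ℝⁿ the map r ↦ F_r(η) is continuously differentiable on (1−δ, 1+δ), and for every r ∈ (1−δ,1+δ) one has ‖∂_r F_r‖_{L^p_τ} ≤ M; (2) for every r ∈ (0,∞) one has ‖F_r‖_{L^p_α} ≤ (1+r)^{−γ} M. Then for almost every η the principal value P(F)(η) := lim_{ε→0⁺} ∫_{{r>0 : |1−r|>ε}} F_r(η)/(1−r) dr exists, and for every α' < α there is a constant C₂ = C₂(δ, α, α', τ, p, γ, n), independent of the family {F_r} and of M, such that ‖ iπ F₁ + P(F) ‖_{L^p_{α'}} ≤ C₂ M. -/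
open MeasureTheory Filter Set
open scoped ENNReal

noncomputable section

/-- The Japanese bracket `⟨x⟩ = (1+|x|²)^{1/2}`. -/
def jap {n : ℕ} (x : Euc n) : ℝ := Real.sqrt (1 + ‖x‖ ^ 2)

lemma mink {X Y : Type*} [MeasurableSpace X] [MeasurableSpace Y] (ν : Measure X) (μ : Measure Y)
    [IsFiniteMeasure ν] [SFinite μ] {p : ℝ} (hp : 1 ≤ p) (g : X → Y → ℝ≥0∞)
    (hg : Measurable (Function.uncurry g)) (K : ℝ≥0∞)
    (hK : ∀ᵐ r ∂ν, eLpNorm (g r) (ENNReal.ofReal p) μ ≤ K) :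
    eLpNorm (fun y => ∫⁻ r, g r y ∂ν) (ENNReal.ofReal p) μ ≤ ν univ * K := by
  have hp0 : 0 < p := by linarith
  have h0 : ENNReal.ofReal p ≠ 0 := by simpa using hp0
  have ht : ENNReal.ofReal p ≠ ∞ := ENNReal.ofReal_ne_top
  have htr : (ENNReal.ofReal p).toReal = p := ENNReal.toReal_ofReal hp0.le
  have h1 : 1 ≤ ENNReal.ofReal p := by simpa using hp
  have key : ∀ y, (∫⁻ r, g r y ∂ν) ^ p ≤ (∫⁻ r, g r y ^ p ∂ν) * ν univ ^ (p - 1) := by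
    intro y
    have hm : Measurable (fun r => g r y) := hg.comp (measurable_id.prodMk measurable_const)
    have := eLpNorm_le_eLpNorm_mul_rpow_measure_univ (μ := ν) (f := fun r => g r y) h1
      hm.aestronglyMeasurable
    rw [eLpNorm_one_eq_lintegral_enorm, eLpNorm_eq_lintegral_rpow_enorm_toReal h0 ht, htr] at this
    simp only [enorm_eq_self] at this
    calc _ ≤ _ := ENNReal.rpow_le_rpow this hp0.le
      _ = _ := by
        rw [ENNReal.mul_rpow_of_nonneg _ _ hp0.le, ← ENNReal.rpow_mul, ← ENNReal.rpow_mul]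
        congr 2
        · rw [one_div, inv_mul_cancel₀ hp0.ne', ENNReal.rpow_one]
        · simp; field_simp
  have hK' : ∀ᵐ r ∂ν, ∫⁻ y, g r y ^ p ∂μ ≤ K ^ p := by
    filter_upwards [hK] with r hr
    rw [eLpNorm_eq_lintegral_rpow_enorm_toReal h0 ht, htr] at hr
    simp only [enorm_eq_self] at hr
    rwa [one_div, ENNReal.rpow_inv_le_iff hp0] at hr
  rw [eLpNorm_eq_lintegral_rpow_enorm_toReal h0 ht, htr]
  simp only [enorm_eq_self]
  rw [one_div, ENNReal.rpow_inv_le_iff hp0]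
  have hgp : Measurable (Function.uncurry fun r y => g r y ^ p) := hg.pow_const p
  calc ∫⁻ y, (∫⁻ r, g r y ∂ν) ^ p ∂μ ≤ ∫⁻ y, (∫⁻ r, g r y ^ p ∂ν) * ν univ ^ (p - 1) ∂μ :=
        lintegral_mono key
    _ = (∫⁻ y, (∫⁻ r, g r y ^ p ∂ν) ∂μ) * ν univ ^ (p - 1) := by
        rw [lintegral_mul_const _ hgp.lintegral_prod_left]
    _ = (∫⁻ r, ∫⁻ y, g r y ^ p ∂μ ∂ν) * ν univ ^ (p - 1) := by
        rw [lintegral_lintegral_swap hgp.aemeasurable]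
    _ ≤ (∫⁻ r, K ^ p ∂ν) * ν univ ^ (p - 1) := by
        exact mul_le_mul' (lintegral_mono_ae hK') le_rfl
    _ = (ν univ * K) ^ p := by
        rw [lintegral_const, ENNReal.mul_rpow_of_nonneg _ _ hp0.le, mul_assoc, mul_comm]
        congr 1
        conv_lhs => enter [1]; rw [← ENNReal.rpow_one (ν univ)]
        rw [← ENNReal.rpow_add_of_nonneg _ _ (by norm_num) (by linarith)]
        congr 1; ring

lemma mink' {X Y : Type*} [MeasurableSpace X] [MeasurableSpace Y] (ρ : Measure X) (μ : Measure Y)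
    [SFinite μ] {p : ℝ} (hp : 1 ≤ p) (f : X → Y → ℝ≥0∞)
    (hf : Measurable (Function.uncurry f)) (w : X → ℝ≥0∞) (hw : Measurable w)
    (hw0 : ∀ᵐ r ∂ρ, w r ≠ 0) (hwt : ∀ r, w r ≠ ∞) (hwi : ∫⁻ r, w r ∂ρ ≠ ∞) (K : ℝ≥0∞)
    (hK : ∀ᵐ r ∂ρ, eLpNorm (f r) (ENNReal.ofReal p) μ ≤ w r * K) :
    eLpNorm (fun y => ∫⁻ r, f r y ∂ρ) (ENNReal.ofReal p) μ ≤ (∫⁻ r, w r ∂ρ) * K := by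
  have hp0 : 0 < p := by linarith
  have h0 : ENNReal.ofReal p ≠ 0 := by simpa using hp0
  have ht : ENNReal.ofReal p ≠ ∞ := ENNReal.ofReal_ne_top
  have htr : (ENNReal.ofReal p).toReal = p := ENNReal.toReal_ofReal hp0.le
  have hu : (ρ.withDensity w) univ = ∫⁻ r, w r ∂ρ := by simp [withDensity_apply]
  have : IsFiniteMeasure (ρ.withDensity w) := ⟨by rw [hu]; exact hwi.lt_top⟩
  have hgm : Measurable (Function.uncurry fun r y => (w r)⁻¹ * f r y) :=
    (hw.comp measurable_fst).inv.mul hf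
  have := mink (ρ.withDensity w) μ hp (fun r y => (w r)⁻¹ * f r y) hgm K ?_
  · rw [hu] at this
    convert this using 3 with y
    have hm : Measurable (fun r => (w r)⁻¹ * f r y) := hgm.comp (measurable_id.prodMk measurable_const)
    rw [lintegral_withDensity_eq_lintegral_mul _ hw hm]
    apply lintegral_congr_ae
    filter_upwards [hw0] with r hr
    simp only [Pi.mul_apply]
    rw [← mul_assoc, ENNReal.mul_inv_cancel hr (hwt r), one_mul]
  · apply (withDensity_absolutelyContinuous ρ w).ae_le
    filter_upwards [hw0, hK] with r hr hKr
    rw [eLpNorm_eq_lintegral_rpow_enorm_toReal h0 ht, htr] at hKr ⊢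
    simp only [enorm_eq_self] at hKr ⊢
    simp_rw [ENNReal.mul_rpow_of_nonneg _ _ hp0.le]
    have hfr : Measurable (f r) := hf.comp (measurable_const.prodMk measurable_id)
    rw [lintegral_const_mul _ (hfr.pow_const p), ENNReal.mul_rpow_of_nonneg _ _ (by positivity),
      ← ENNReal.rpow_mul, one_div, mul_inv_cancel₀ hp0.ne', ENNReal.rpow_one]
    rw [one_div] at hKr
    calc _ ≤ (w r)⁻¹ * (w r * K) := by gcongr
      _ = K := by rw [← mul_assoc, ENNReal.inv_mul_cancel hr (hwt r), one_mul]

def wt (e θ γ : ℝ) (r : ℝ) : ℝ := if |1 - r| ≤ e then |1 - r| ^ (θ - 1) else (1 + r) ^ (-γ - 1)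

lemma wt_meas (e θ γ : ℝ) : Measurable (wt e θ γ) := by
  unfold wt
  refine Measurable.ite ?_ (by fun_prop) (by fun_prop)
  exact measurableSet_le (by fun_prop) (by fun_prop)

lemma wt_int (e θ γ : ℝ) (he : 0 < e) (hθ : 0 < θ) (hγ : 0 < γ) :
    ∫⁻ r in Ioi (0:ℝ), ENNReal.ofReal (wt e θ γ r) ≠ ∞ := by
  have near : IntegrableOn (fun r : ℝ => |1 - r| ^ (θ - 1)) (Icc (1 - e) (1 + e)) := by
    have h1 : IntervalIntegrable (fun r : ℝ => |1 - r| ^ (θ - 1)) volume (1 - e) 1 := by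
      have := (intervalIntegral.intervalIntegrable_rpow' (a := e) (b := 0) (r := θ - 1)
        (by linarith)).comp_sub_left 1
      simp only [sub_zero] at this
      refine this.congr ?_
      intro x hx
      rw [uIoc_of_le (by linarith)] at hx
      simp only
      rw [abs_of_nonneg (by linarith [hx.2])]
    have h2 : IntervalIntegrable (fun r : ℝ => |1 - r| ^ (θ - 1)) volume 1 (1 + e) := by
      have := (intervalIntegral.intervalIntegrable_rpow' (a := 0) (b := e) (r := θ - 1)
        (by linarith)).comp_sub_right 1
      simp only [zero_add, add_comm e 1] at this
      refine this.congr ?_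
      intro x hx
      rw [uIoc_of_le (by linarith)] at hx
      simp only
      rw [abs_of_nonpos (by linarith [hx.1])]
      congr 1; ring
    have := h1.trans h2
    rwa [intervalIntegrable_iff_integrableOn_Icc_of_le (by linarith)] at this
  have far : IntegrableOn (fun r : ℝ => (1 + r) ^ (-γ - 1)) (Ioi 0) := by
    have := integrableOn_add_rpow_Ioi_of_lt (a := -γ - 1) (c := 0) (m := 1) (by linarith) (by norm_num)
    simpa only [add_comm] using this
  have near' : Integrable ((Icc (1 - e) (1 + e)).indicator (fun r : ℝ => |1 - r| ^ (θ - 1)))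
      (volume.restrict (Ioi 0)) :=
    (near.integrable_indicator measurableSet_Icc).restrict
  have hle : ∫⁻ r in Ioi (0:ℝ), ENNReal.ofReal (wt e θ γ r) ≤
      ∫⁻ r in Ioi (0:ℝ), ENNReal.ofReal (((Icc (1 - e) (1 + e)).indicator (fun r : ℝ => |1 - r| ^ (θ - 1)) r) +
        (1 + r) ^ (-γ - 1)) := by
    apply setLIntegral_mono' measurableSet_Ioi
    intro r hr
    have hr' : (0:ℝ) < r := hr
    apply ENNReal.ofReal_le_ofReal
    unfold wt
    have hpos : 0 ≤ (1 + r) ^ (-γ - 1) := by positivity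
    split_ifs with h
    · rw [abs_le] at h
      rw [indicator_of_mem (by constructor <;> linarith)]
      linarith
    · have : 0 ≤ (Icc (1 - e) (1 + e)).indicator (fun r : ℝ => |1 - r| ^ (θ - 1)) r :=
        indicator_nonneg (fun x _ => by positivity) _
      linarith
  refine (hle.trans_lt ?_).ne
  exact (near'.add far).lintegral_lt_top

lemma jap_pos {n : ℕ} (x : Euc n) : 0 < jap x := by unfold jap; positivity

lemma one_le_jap {n : ℕ} (x : Euc n) : 1 ≤ jap x := by
  unfold jap
  rw [Real.one_le_sqrt]
  nlinarith [sq_nonneg ‖x‖]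

lemma jap_meas {n : ℕ} (a : ℝ) : Measurable (fun x : Euc n => jap x ^ a) := by
  unfold jap; fun_prop

lemma diff_bound {n : ℕ} {p δ τ M : ℝ} (hp : 1 ≤ p) (hδ0 : 0 < δ)
    (F : ℝ → Euc n → ℂ) (hF : Measurable (Function.uncurry F))
    (hC : ∀ᵐ η ∂(volume : Measure (Euc n)),
          ContDiffOn ℝ 1 (fun r => F r η) (Set.Ioo (1 - δ) (1 + δ)))
    (hD : ∀ r ∈ Set.Ioo (1 - δ) (1 + δ),
          eLpNorm (fun η : Euc n => (jap η ^ τ : ℝ) • deriv (fun s => F s η) r)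
              (ENNReal.ofReal p) volume ≤ ENNReal.ofReal M) (r : ℝ)
    (hr : r ∈ Set.Ioo (1 - δ) (1 + δ)) :
    eLpNorm (fun η : Euc n => (jap η ^ τ : ℝ) • (F r η - F 1 η)) (ENNReal.ofReal p) volume
      ≤ ENNReal.ofReal |r - 1| * ENNReal.ofReal M := by
  set I := Set.Ioo (1 - δ) (1 + δ) with hI
  have h1I : (1:ℝ) ∈ I := ⟨by linarith, by linarith⟩
  obtain ⟨S, hSae, hSm, hS⟩ : ∃ S : Set (Euc n), S ∈ ae (volume : Measure (Euc n)) ∧ MeasurableSet S ∧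
      ∀ η ∈ S, ContDiffOn ℝ 1 (fun r => F r η) I := by
    refine ⟨(toMeasurable volume {η | ContDiffOn ℝ 1 (fun r => F r η) I}ᶜ)ᶜ, ?_,
      (measurableSet_toMeasurable _ _).compl, ?_⟩
    · rw [mem_ae_iff, compl_compl, measure_toMeasurable]
      exact hC
    · intro η hη
      by_contra h
      exact hη (subset_toMeasurable _ _ h)
  have hdiff : ∀ η ∈ S, ∀ s ∈ I, DifferentiableAt ℝ (fun r => F r η) s := fun η hη s hs =>
    ((hS η hη).differentiableOn (by norm_num)).differentiableAt (isOpen_Ioo.mem_nhds hs)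
  have hcont : ∀ η ∈ S, ContinuousOn (deriv (fun r => F r η)) I := fun η hη =>
    (hS η hη).continuousOn_deriv_of_isOpen isOpen_Ioo le_rfl
  let D : ℝ × Euc n → ℂ := (I ×ˢ S).indicator (fun z => deriv (fun s => F s z.2) z.1)
  have hDm : Measurable D := by
    let G : ℕ → ℝ × Euc n → ℂ := fun k => (I ×ˢ S).indicator
      (fun z => (1 / ((k : ℝ) + 1))⁻¹ • (F (z.1 + 1 / ((k : ℝ) + 1)) z.2 - F z.1 z.2))
    refine measurable_of_tendsto_metrizable (f := G) ?_ ?_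
    · intro k
      refine Measurable.indicator ?_ (measurableSet_Ioo.prod hSm)
      have h1 : Measurable (fun z : ℝ × Euc n => F (z.1 + 1 / ((k : ℝ) + 1)) z.2) :=
        hF.comp ((measurable_fst.add_const _).prodMk measurable_snd)
      have h2 : Measurable (fun z : ℝ × Euc n => F z.1 z.2) := hF
      exact (h1.sub h2).const_smul ((1 / ((k : ℝ) + 1))⁻¹ : ℝ)
    · rw [tendsto_pi_nhds]
      intro z
      by_cases hz : z ∈ I ×ˢ S
      · simp only [G, D, indicator_of_mem hz]
        have := (hdiff z.2 hz.2 z.1 hz.1).hasDerivAt.tendsto_slope_zero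
        refine this.comp ?_
        rw [tendsto_nhdsWithin_iff]
        refine ⟨tendsto_one_div_add_atTop_nhds_zero_nat, Eventually.of_forall fun k => ?_⟩
        simp only [mem_compl_iff, mem_singleton_iff]
        positivity
      · simp only [G, D, indicator_of_notMem hz]
        exact tendsto_const_nhds
  have hsub : uIcc 1 r ⊆ I := by
    rw [hI]; exact (ordConnected_Ioo).uIcc_subset h1I hr
  have hsub' : uIoc 1 r ⊆ I := uIoc_subset_uIcc.trans hsub
  have : IsFiniteMeasure (volume.restrict (uIoc 1 r)) := ⟨by
    rw [Measure.restrict_apply_univ, Real.volume_uIoc]; exact ENNReal.ofReal_lt_top⟩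
  have hm := mink (volume.restrict (uIoc 1 r)) (volume : Measure (Euc n)) hp
    (fun s η => ‖(jap η ^ τ : ℝ) • D (s, η)‖ₑ)
    ((((jap_meas τ).comp measurable_snd).smul hDm).enorm) (ENNReal.ofReal M) ?_
  · have hu : (volume.restrict (uIoc 1 r)) univ = ENNReal.ofReal |r - 1| := by
      rw [Measure.restrict_apply_univ, Real.volume_uIoc]
    rw [hu] at hm
    refine le_trans (eLpNorm_mono_enorm_ae ?_) hm
    filter_upwards [hSae] with η hη
    rw [enorm_eq_self]
    have hftc : F r η - F 1 η = ∫ s in (1:ℝ)..r, deriv (fun s => F s η) s := by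
      rw [intervalIntegral.integral_deriv_eq_sub]
      · intro x hx; exact hdiff η hη x (hsub hx)
      · exact ((hcont η hη).mono hsub).intervalIntegrable
    simp_rw [enorm_smul]
    rw [lintegral_const_mul']
    · gcongr
      rw [hftc, intervalIntegral.intervalIntegral_eq_integral_uIoc]
      calc _ = ‖∫ s in uIoc 1 r, deriv (fun s => F s η) s‖ₑ := by
            split_ifs <;> simp [enorm_neg]
        _ ≤ ∫⁻ s in uIoc 1 r, ‖deriv (fun s => F s η) s‖ₑ := enorm_integral_le_lintegral_enorm _
        _ = _ := by
            apply setLIntegral_congr_fun measurableSet_uIoc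
            intro s hs
            simp only [D]
            rw [indicator_of_mem (show (s, η) ∈ I ×ˢ S from ⟨hsub' hs, hη⟩)]
    · exact enorm_ne_top
  · rw [ae_restrict_iff' measurableSet_uIoc]
    refine Eventually.of_forall fun s hs => ?_
    refine le_trans (eLpNorm_mono_enorm_ae ?_) (hD s (hsub' hs))
    filter_upwards [hSae] with η hη
    rw [enorm_eq_self]
    simp only [D]
    rw [indicator_of_mem (show (s, η) ∈ I ×ˢ S from ⟨hsub' hs, hη⟩)]

lemma pv_lim (f : ℝ → ℂ) (e : ℝ) (he : 0 < e) (he1 : e < 1)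
    (hHi : IntegrableOn (fun r => (f r - if |1 - r| ≤ e then f 1 else 0) / ((1 - r : ℝ) : ℂ)) (Ioi 0)) :
    Tendsto (fun ε : ℝ => ∫ r in {r : ℝ | 0 < r ∧ ε < |1 - r|}, f r / ((1 - r : ℝ) : ℂ))
      (nhdsWithin 0 (Set.Ioi 0))
      (nhds (∫ r in Ioi 0, (f r - if |1 - r| ≤ e then f 1 else 0) / ((1 - r : ℝ) : ℂ))) := by
  set H : ℝ → ℂ := fun r => (f r - if |1 - r| ≤ e then f 1 else 0) / ((1 - r : ℝ) : ℂ) with hH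
  have hBm : ∀ ε : ℝ, MeasurableSet {r : ℝ | ε < |1 - r|} := fun ε =>
    measurableSet_lt (by fun_prop) (by fun_prop)
  have hAm : ∀ ε : ℝ, MeasurableSet {r : ℝ | 0 < r ∧ ε < |1 - r|} := fun ε =>
    (measurableSet_Ioi (a := (0:ℝ))).inter (hBm ε)
  have step : ∀ ε ∈ Ioo 0 e, ∫ r in {r : ℝ | 0 < r ∧ ε < |1 - r|}, f r / ((1 - r : ℝ) : ℂ) =
      ∫ r in Ioi (0:ℝ), {r : ℝ | ε < |1 - r|}.indicator H r := by
    intro ε hε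
    set A := {r : ℝ | 0 < r ∧ ε < |1 - r|} with hA
    let B := {r : ℝ | ε < |1 - r| ∧ |1 - r| ≤ e}
    have hBe : MeasurableSet {r : ℝ | |1 - r| ≤ e} := measurableSet_le (by fun_prop) (by fun_prop)
    have hBm' : MeasurableSet B := (hBm ε).inter hBe
    let φ : ℝ → ℂ := B.indicator (fun r => (((1 - r : ℝ) : ℂ))⁻¹)
    have hφint : Integrable φ := by
      rw [integrable_indicator_iff hBm']
      have hfin : volume B < ∞ := by
        refine lt_of_le_of_lt (measure_mono (t := Icc (1 - e) (1 + e)) ?_) (by simp)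
        intro r hr
        have := abs_le.1 hr.2
        constructor <;> linarith
      refine Measure.integrableOn_of_bounded (M := ε⁻¹) hfin.ne ?_ ?_
      · exact (by fun_prop : Measurable fun r : ℝ => (((1 - r : ℝ) : ℂ))⁻¹).aestronglyMeasurable
      · rw [ae_restrict_iff' hBm']
        refine Eventually.of_forall fun r hr => ?_
        rw [norm_inv, Complex.norm_real, Real.norm_eq_abs]
        exact inv_anti₀ hε.1 hr.1.le
    have hφ0 : ∫ r, φ r = 0 := by
      have h1 : ∫ r, φ (2 - r) = ∫ r, φ r := integral_sub_left_eq_self φ volume 2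
      have h2 : ∀ r, φ (2 - r) = - φ r := by
        intro r
        have habs : |1 - (2 - r)| = |1 - r| := by
          rw [← abs_neg]; congr 1; ring
        have hiff : (2 - r) ∈ B ↔ r ∈ B := by
          simp only [B, mem_setOf_eq, habs]
        by_cases hr : r ∈ B
        · simp only [φ, indicator_of_mem hr, indicator_of_mem (hiff.2 hr)]
          rw [← inv_neg]; congr 1; push_cast; ring
        · simp only [φ, indicator_of_notMem hr, indicator_of_notMem (fun h => hr (hiff.1 h)), neg_zero]
      simp_rw [h2, integral_neg] at h1
      have h3 : (2:ℂ) * ∫ r, φ r = 0 := by linear_combination -h1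
      simpa using h3
    have hφA : ∫ r in A, φ r = 0 := by
      rw [← hφ0]
      apply setIntegral_eq_integral_of_forall_compl_eq_zero
      intro r hr
      apply indicator_of_notMem
      intro hB
      apply hr
      have := abs_le.1 hB.2
      exact ⟨by linarith, hB.1⟩
    have hsplit : ∫ r in A, f r / ((1 - r : ℝ) : ℂ) = ∫ r in A, (H r + f 1 * φ r) := by
      apply setIntegral_congr_fun (hAm ε)
      intro r hr
      simp only [hH]
      by_cases h : |1 - r| ≤ e
      · simp only [φ, indicator_of_mem (show r ∈ B from ⟨hr.2, h⟩), if_pos h]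
        rw [div_eq_mul_inv, div_eq_mul_inv]; ring
      · simp only [φ, indicator_of_notMem (show r ∉ B from fun hB => h hB.2), if_neg h]
        simp
    rw [hsplit, integral_add (hHi.mono_set (fun r hr => hr.1)) (hφint.integrableOn.const_mul _),
      integral_const_mul, hφA, mul_zero, add_zero, setIntegral_indicator (hBm ε)]
    rfl
  have lim : Tendsto (fun ε : ℝ => ∫ r in Ioi (0:ℝ), {r : ℝ | ε < |1 - r|}.indicator H r)
      (nhdsWithin 0 (Set.Ioi 0)) (nhds (∫ r in Ioi 0, H r)) := by
    refine tendsto_integral_filter_of_dominated_convergence (fun r => ‖H r‖) ?_ ?_ hHi.norm ?_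
    · exact Eventually.of_forall fun ε => hHi.aestronglyMeasurable.indicator (hBm ε)
    · exact Eventually.of_forall fun ε => Eventually.of_forall fun r => norm_indicator_le_norm_self _ _
    · have : ∀ᵐ r : ℝ ∂(volume.restrict (Ioi 0)), r ≠ 1 :=
        ae_restrict_of_ae (Measure.ae_ne volume 1)
      filter_upwards [this] with r hr
      apply tendsto_const_nhds.congr'
      have hpos : 0 < |1 - r| := abs_pos.2 (sub_ne_zero.2 hr.symm)
      filter_upwards [mem_nhdsWithin_of_mem_nhds (Iio_mem_nhds hpos)] with ε hε
      rw [indicator_of_mem]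
      exact hε
  refine lim.congr' ?_
  filter_upwards [Ioo_mem_nhdsGT he] with ε hε
  rw [step ε hε]

lemma interp {J D x θ α α' τ : ℝ} (hJ : 1 ≤ J) (hD : 0 ≤ D) (hx : 0 < x) (hθ : 0 < θ) (hθ1 : θ < 1)
    (h : α' ≤ θ * τ + (1 - θ) * α) :
    J ^ α' * (D / x) ≤ x ^ (θ - 1) * (J ^ τ * D * x⁻¹ + J ^ α * D) := by
  have hJ0 : 0 < J := by linarith
  have ha : 0 ≤ J ^ τ * D * x⁻¹ := by positivity
  have hb : 0 ≤ J ^ α * D := by positivity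
  have h1 := Real.geom_mean_le_arith_mean2_weighted hθ.le (by linarith : 0 ≤ 1 - θ) ha hb (by ring)
  have h2 : (J ^ τ * D * x⁻¹) ^ θ * (J ^ α * D) ^ (1 - θ) ≤ J ^ τ * D * x⁻¹ + J ^ α * D := by
    nlinarith
  have h3 : J ^ α' ≤ J ^ (θ * τ + (1 - θ) * α) := Real.rpow_le_rpow_of_exponent_le hJ h
  have hDD : D ^ θ * D ^ (1 - θ) = D := by
    rw [← Real.rpow_add_of_nonneg hD hθ.le (by linarith)]; simp
  have hxx : x ^ (θ - 1) * (x⁻¹) ^ θ = x⁻¹ := by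
    rw [Real.inv_rpow hx.le, ← Real.rpow_neg hx.le, ← Real.rpow_add hx, ← Real.rpow_neg_one]
    congr 1; ring
  calc J ^ α' * (D / x) ≤ J ^ (θ * τ + (1 - θ) * α) * (D / x) := by gcongr
    _ = x ^ (θ - 1) * ((J ^ τ * D * x⁻¹) ^ θ * (J ^ α * D) ^ (1 - θ)) := by
      rw [Real.mul_rpow (by positivity) (by positivity), Real.mul_rpow (by positivity) hD,
        Real.mul_rpow (by positivity) hD, ← Real.rpow_mul hJ0.le, ← Real.rpow_mul hJ0.le,
        Real.rpow_add hJ0, mul_comm θ τ, mul_comm (1 - θ) α, div_eq_mul_inv]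
      conv_lhs => rw [← hxx, ← hDD]
      ring
    _ ≤ _ := by gcongr

lemma slice_bound {n : ℕ} {p α δ τ γ α' θ M : ℝ} (hp : 1 ≤ p)
    (hδ0 : 0 < δ) (hδ1 : δ < 1) (hγ : 0 < γ) (hα' : α' < α) (hθ : 0 < θ) (hθ1 : θ < 1)
    (hθα : α' ≤ θ * τ + (1 - θ) * α) (hM : 0 < M)
    (F : ℝ → Euc n → ℂ) (hF : Measurable (Function.uncurry F))
    (hC : ∀ᵐ η ∂(volume : Measure (Euc n)),
          ContDiffOn ℝ 1 (fun r => F r η) (Set.Ioo (1 - δ) (1 + δ)))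
    (hD : ∀ r ∈ Set.Ioo (1 - δ) (1 + δ),
          eLpNorm (fun η : Euc n => (jap η ^ τ : ℝ) • deriv (fun s => F s η) r)
              (ENNReal.ofReal p) volume ≤ ENNReal.ofReal M)
    (hα : ∀ r : ℝ, 0 < r →
          eLpNorm (fun η : Euc n => (jap η ^ α : ℝ) • F r η) (ENNReal.ofReal p) volume
            ≤ ENNReal.ofReal ((1 + r) ^ (-γ) * M)) (r : ℝ) (hr : 0 < r) (hr1 : r ≠ 1) :
    eLpNorm (fun η : Euc n => (jap η ^ α' : ℝ) •
      ((F r η - if |1 - r| ≤ δ / 2 then F 1 η else 0) / ((1 - r : ℝ) : ℂ))) (ENNReal.ofReal p) volume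
      ≤ ENNReal.ofReal (wt (δ / 2) θ γ r) * ENNReal.ofReal ((4 + 4 / δ) * M) := by
  have h1 : 1 ≤ ENNReal.ofReal p := by simpa using hp
  have hFm : ∀ r, Measurable (F r) := fun r => hF.comp (measurable_const.prodMk measurable_id)
  have hpos : 0 < |1 - r| := abs_pos.2 (sub_ne_zero.2 hr1.symm)
  have hαM : ∀ r : ℝ, 0 < r →
      eLpNorm (fun η : Euc n => (jap η ^ α : ℝ) • F r η) (ENNReal.ofReal p) volume
            ≤ ENNReal.ofReal M := by
    intro r hr
    refine (hα r hr).trans (ENNReal.ofReal_le_ofReal ?_)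
    have : (1 + r) ^ (-γ) ≤ 1 := Real.rpow_le_one_of_one_le_of_nonpos (by linarith) (by linarith)
    nlinarith
  have hδ4 : 0 < 4 / δ := by positivity
  unfold wt
  by_cases h : |1 - r| ≤ δ / 2
  · simp only [if_pos h]
    set x := |1 - r| with hx
    have hrI : r ∈ Set.Ioo (1 - δ) (1 + δ) := by
      have := abs_le.1 h
      constructor <;> linarith
    have hd := diff_bound hp hδ0 F hF hC hD r hrI
    rw [abs_sub_comm, ← hx] at hd
    have hm : ∀ a : ℝ, Measurable (fun η : Euc n => (jap η ^ a : ℝ) • (F r η - F 1 η)) := fun a =>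
      (jap_meas a).smul ((hFm r).sub (hFm 1))
    have hd2 : eLpNorm (fun η : Euc n => (jap η ^ α : ℝ) • (F r η - F 1 η)) (ENNReal.ofReal p) volume
        ≤ ENNReal.ofReal M + ENNReal.ofReal M := by
      have := eLpNorm_sub_le (μ := (volume : Measure (Euc n)))
        (((jap_meas α).smul (hFm r)).aestronglyMeasurable)
        (((jap_meas α).smul (hFm 1)).aestronglyMeasurable) h1
      refine le_trans (le_of_eq ?_) (this.trans (add_le_add (hαM r hr) (hαM 1 one_pos)))
      congr 1
      ext η
      simp [mul_sub]
    let G1 : Euc n → ℂ := fun η => (jap η ^ τ : ℝ) • (F r η - F 1 η)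
    let G2 : Euc n → ℂ := fun η => (jap η ^ α : ℝ) • (F r η - F 1 η)
    have hG : eLpNorm (x⁻¹ • (fun η => ‖G1 η‖) + fun η => ‖G2 η‖) (ENNReal.ofReal p) volume ≤
        ENNReal.ofReal ((4 + 4 / δ) * M) := by
      refine (eLpNorm_add_le ((hm τ).norm.const_smul _).aestronglyMeasurable
        (hm α).norm.aestronglyMeasurable h1).trans ?_
      rw [eLpNorm_const_smul, eLpNorm_norm, eLpNorm_norm]
      calc _ ≤ ‖x⁻¹‖ₑ * (ENNReal.ofReal x * ENNReal.ofReal M) +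
            (ENNReal.ofReal M + ENNReal.ofReal M) := by gcongr
        _ = ENNReal.ofReal (3 * M) := by
          rw [Real.enorm_eq_ofReal (by positivity), ← ENNReal.ofReal_mul hpos.le,
            ← ENNReal.ofReal_mul (by positivity), ← ENNReal.ofReal_add hM.le hM.le,
            ← ENNReal.ofReal_add (by positivity) (by positivity)]
          congr 1
          field_simp; ring
        _ ≤ _ := ENNReal.ofReal_le_ofReal (by nlinarith)
    have hle : eLpNorm (fun η : Euc n => (jap η ^ α' : ℝ) •
        ((F r η - F 1 η) / ((1 - r : ℝ) : ℂ))) (ENNReal.ofReal p) volume ≤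
        eLpNorm (x ^ (θ - 1) • (x⁻¹ • (fun η => ‖G1 η‖) + fun η => ‖G2 η‖)) (ENNReal.ofReal p) volume := by
      apply eLpNorm_mono_real
      intro η
      have hj := jap_pos η
      have := interp (one_le_jap η) (norm_nonneg (F r η - F 1 η)) hpos hθ hθ1 hθα
      simp only [Pi.smul_apply, Pi.add_apply, smul_eq_mul, G1, G2, norm_smul, norm_div,
        Complex.norm_real, Real.norm_eq_abs, abs_of_pos (Real.rpow_pos_of_pos hj _)]
      refine this.trans (le_of_eq ?_)
      ring
    refine hle.trans ?_
    rw [eLpNorm_const_smul, Real.enorm_eq_ofReal (by positivity)]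
    gcongr
  · simp only [if_neg h, sub_zero]
    have hc : |1 - r|⁻¹ ≤ (4 + 4 / δ) * (1 + r)⁻¹ := by
      rw [inv_eq_one_div, div_le_iff₀ hpos, mul_assoc, mul_comm, mul_assoc, inv_mul_eq_div, 
        le_div_iff₀ (by linarith)]
      have h5 : 1 + r ≤ 2 + |1 - r| := by linarith [neg_abs_le (1 - r)]
      have h6 : 2 ≤ 4 / δ * |1 - r| := by
        have : 4 / δ * (δ / 2) = 2 := by field_simp; norm_num
        nlinarith
      nlinarith
    have hle : eLpNorm (fun η : Euc n => (jap η ^ α' : ℝ) •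
        (F r η / ((1 - r : ℝ) : ℂ))) (ENNReal.ofReal p) volume ≤
        eLpNorm (((4 + 4 / δ) * (1 + r)⁻¹) • fun η : Euc n => (jap η ^ α : ℝ) • F r η)
          (ENNReal.ofReal p) volume := by
      apply eLpNorm_mono
      intro η
      have hj := jap_pos η
      simp only [Pi.smul_apply, norm_smul, norm_div, norm_mul,
        Complex.norm_real, Real.norm_eq_abs, abs_of_pos (Real.rpow_pos_of_pos hj _)]
      rw [← abs_mul, abs_of_pos (show 0 < (4 + 4 / δ) * (1 + r)⁻¹ by positivity)]
      have h7 : jap η ^ α' ≤ jap η ^ α := Real.rpow_le_rpow_of_exponent_le (one_le_jap η) hα'.le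
      calc jap η ^ α' * (‖F r η‖ / |1 - r|) = |1 - r|⁻¹ * (jap η ^ α' * ‖F r η‖) := by ring
        _ ≤ _ := by gcongr
    refine hle.trans ?_
    rw [eLpNorm_const_smul, Real.enorm_eq_ofReal (by positivity)]
    calc _ ≤ ENNReal.ofReal ((4 + 4 / δ) * (1 + r)⁻¹) * ENNReal.ofReal ((1 + r) ^ (-γ) * M) := by
          gcongr; exact hα r hr
      _ = _ := by
        rw [← ENNReal.ofReal_mul (by positivity), ← ENNReal.ofReal_mul (by positivity),
          Real.rpow_sub_one (by positivity)]
        congr 1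
        ring

/-- the principal value estimate (Proposition on `(iπd + P)`). -/
theorem stmt3 (n : ℕ) (hn : 1 ≤ n) (p α δ τ γ : ℝ) (hp : 1 ≤ p)
    (hδ0 : 0 < δ) (hδ1 : δ < 1) (hγ : 0 < γ) (α' : ℝ) (hα' : α' < α) :
    ∃ C₂ : ℝ, 0 < C₂ ∧
      ∀ M : ℝ, 0 < M →
      ∀ F : ℝ → Euc n → ℂ,
        Measurable (Function.uncurry F) →
        (∀ r : ℝ, 0 < r → LocallyIntegrable (F r) volume) →
        (∀ᵐ η ∂(volume : Measure (Euc n)),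
          ContDiffOn ℝ 1 (fun r => F r η) (Set.Ioo (1 - δ) (1 + δ))) →
        (∀ r ∈ Set.Ioo (1 - δ) (1 + δ),
          eLpNorm (fun η : Euc n => (jap η ^ τ : ℝ) • deriv (fun s => F s η) r)
              (ENNReal.ofReal p) volume ≤ ENNReal.ofReal M) →
        (∀ r : ℝ, 0 < r →
          eLpNorm (fun η : Euc n => (jap η ^ α : ℝ) • F r η) (ENNReal.ofReal p) volume
            ≤ ENNReal.ofReal ((1 + r) ^ (-γ) * M)) →
        ∃ P : Euc n → ℂ,
          (∀ᵐ η ∂(volume : Measure (Euc n)), Tendsto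
              (fun ε : ℝ => ∫ r in {r : ℝ | 0 < r ∧ ε < |1 - r|},
                  F r η / ((1 - r : ℝ) : ℂ))
              (nhdsWithin 0 (Set.Ioi 0)) (nhds (P η))) ∧
          eLpNorm (fun η : Euc n => (jap η ^ α' : ℝ) •
              ((Real.pi : ℂ) * Complex.I * F 1 η + P η)) (ENNReal.ofReal p) volume
            ≤ ENNReal.ofReal (C₂ * M) := by
  obtain ⟨θ, hθ, hθ1, hθα⟩ : ∃ θ : ℝ, 0 < θ ∧ θ < 1 ∧ α' ≤ θ * τ + (1 - θ) * α := by
    have hd : 0 < |α - τ| + 1 := by positivity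
    refine ⟨min (1 / 2) ((α - α') / (|α - τ| + 1)), ?_, ?_, ?_⟩
    · exact lt_min (by norm_num) (div_pos (by linarith) hd)
    · exact (min_le_left _ _).trans_lt (by norm_num)
    · set θ := min (1 / 2) ((α - α') / (|α - τ| + 1)) with hθd
      have h0 : 0 < θ := lt_min (by norm_num) (div_pos (by linarith) hd)
      have h1 : θ * (|α - τ| + 1) ≤ α - α' := (le_div_iff₀ hd).1 (min_le_right _ _)
      nlinarith [le_abs_self (α - τ)]
  have h1p : 1 ≤ ENNReal.ofReal p := by simpa using hp
  have hp0 : ENNReal.ofReal p ≠ 0 := (zero_lt_one.trans_le h1p).ne'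
  have hpt : ENNReal.ofReal p ≠ ∞ := ENNReal.ofReal_ne_top
  have hWt := wt_int (δ / 2) θ γ (by linarith) hθ hγ
  set W := ∫⁻ r in Ioi (0:ℝ), ENNReal.ofReal (wt (δ / 2) θ γ r) with hW
  have hpi := Real.pi_pos
  have hK0 : 0 < 4 + 4 / δ := by positivity
  refine ⟨Real.pi + W.toReal * (4 + 4 / δ), by positivity, ?_⟩
  intro M hM F hF _ hC hD hα
  let H : ℝ → Euc n → ℂ := fun r η =>
    (F r η - if |1 - r| ≤ δ / 2 then F 1 η else 0) / ((1 - r : ℝ) : ℂ)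
  have hF1 : Measurable (F 1) := hF.comp (measurable_const.prodMk measurable_id)
  have hHm : Measurable (Function.uncurry H) := by
    have h1 : Measurable (fun z : ℝ × Euc n => if |1 - z.1| ≤ δ / 2 then F 1 z.2 else 0) :=
      Measurable.ite (measurableSet_le (by fun_prop) (by fun_prop)) (hF1.comp measurable_snd)
        measurable_const
    exact (hF.sub h1).div (by fun_prop : Measurable fun z : ℝ × Euc n => ((1 - z.1 : ℝ) : ℂ))
  have hJHm : Measurable (Function.uncurry fun r η => (jap η ^ α' : ℝ) • H r η) :=
    ((jap_meas α').comp measurable_snd).smul hHm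
  have hne : ∀ᵐ r : ℝ ∂(volume.restrict (Ioi 0)), 0 < r ∧ r ≠ 1 := by
    filter_upwards [ae_restrict_of_ae (Measure.ae_ne volume 1),
      ae_restrict_mem measurableSet_Ioi] with r h1 h2
    exact ⟨h2, h1⟩
  have hmain := mink' (volume.restrict (Ioi (0:ℝ))) (volume : Measure (Euc n)) hp
    (fun r η => ‖(jap η ^ α' : ℝ) • H r η‖ₑ) hJHm.enorm
    (fun r => ENNReal.ofReal (wt (δ / 2) θ γ r)) (wt_meas _ _ _).ennreal_ofReal
    (by
      filter_upwards [hne] with r hr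
      have hpos : 0 < |1 - r| := abs_pos.2 (sub_ne_zero.2 hr.2.symm)
      have hr0 := hr.1
      have : 0 < wt (δ / 2) θ γ r := by
        unfold wt; split_ifs <;> positivity
      simpa using this)
    (fun r => ENNReal.ofReal_ne_top) hWt (ENNReal.ofReal ((4 + 4 / δ) * M))
    (by
      filter_upwards [hne] with r hr
      rw [eLpNorm_enorm]
      exact slice_bound hp hδ0 hδ1 hγ hα' hθ hθ1 hθα hM F hF hC hD hα r hr.1 hr.2)
  rw [← hW] at hmain
  have hfin : ∀ᵐ η ∂(volume : Measure (Euc n)), ∫⁻ r in Ioi (0:ℝ), ‖(jap η ^ α' : ℝ) • H r η‖ₑ < ∞ := by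
    have hlt := hmain.trans_lt (ENNReal.mul_lt_top hWt.lt_top ENNReal.ofReal_lt_top)
    rw [eLpNorm_lt_top_iff_lintegral_rpow_enorm_lt_top hp0 hpt] at hlt
    have hmm : Measurable fun η : Euc n => ∫⁻ r in Ioi (0:ℝ), ‖(jap η ^ α' : ℝ) • H r η‖ₑ :=
      hJHm.enorm.lintegral_prod_left'
    filter_upwards [ae_lt_top (hmm.enorm.pow_const _) hlt.ne] with η hη
    rw [enorm_eq_self] at hη
    exact (ENNReal.rpow_lt_top_iff_of_pos (ENNReal.toReal_pos hp0 hpt)).1 hη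
  refine ⟨fun η => ∫ r in Ioi (0:ℝ), H r η, ?_, ?_⟩
  · filter_upwards [hfin] with η hη
    apply pv_lim (fun r => F r η) (δ / 2) (by linarith) (by linarith)
    refine ⟨(hHm.comp (measurable_id.prodMk measurable_const)).aestronglyMeasurable, ?_⟩
    have hj : 0 < jap η ^ α' := Real.rpow_pos_of_pos (jap_pos η) _
    simp_rw [enorm_smul] at hη
    rw [lintegral_const_mul' _ _ enorm_ne_top] at hη
    rw [HasFiniteIntegral]
    by_contra hcon
    rw [not_lt, top_le_iff] at hcon
    change ∫⁻ r in Ioi (0:ℝ), ‖H r η‖ₑ = ∞ at hcon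
    rw [hcon, ENNReal.mul_top (by simpa using hj.ne')] at hη
    exact lt_irrefl _ hη
  · have hPm : Measurable fun η : Euc n => ∫ r in Ioi (0:ℝ), H r η :=
      (hHm.stronglyMeasurable.integral_prod_left).measurable
    have hP : eLpNorm (fun η : Euc n => (jap η ^ α' : ℝ) • ∫ r in Ioi (0:ℝ), H r η)
        (ENNReal.ofReal p) volume ≤ W * ENNReal.ofReal ((4 + 4 / δ) * M) := by
      refine le_trans (eLpNorm_mono_enorm fun η => ?_) hmain
      rw [enorm_eq_self, ← integral_smul]
      exact enorm_integral_le_lintegral_enorm _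
    have h1 : eLpNorm (fun η : Euc n => (jap η ^ α' : ℝ) • ((Real.pi : ℂ) * Complex.I * F 1 η))
        (ENNReal.ofReal p) volume ≤ ENNReal.ofReal (Real.pi * M) := by
      have hle : eLpNorm (fun η : Euc n => (jap η ^ α' : ℝ) • ((Real.pi : ℂ) * Complex.I * F 1 η))
        (ENNReal.ofReal p) volume ≤ eLpNorm (Real.pi • fun η : Euc n => (jap η ^ α : ℝ) • F 1 η)
        (ENNReal.ofReal p) volume := by
        apply eLpNorm_mono
        intro η
        have hj := jap_pos η
        simp only [Pi.smul_apply, norm_smul, norm_mul, Complex.norm_I, mul_one,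
          Complex.norm_real, Real.norm_eq_abs, abs_of_pos (Real.rpow_pos_of_pos hj _), abs_of_pos hpi]
        have h7 : jap η ^ α' ≤ jap η ^ α := Real.rpow_le_rpow_of_exponent_le (one_le_jap η) hα'.le
        calc jap η ^ α' * (Real.pi * ‖F 1 η‖) = Real.pi * (jap η ^ α' * ‖F 1 η‖) := by ring
          _ ≤ _ := by gcongr
      refine hle.trans ?_
      rw [eLpNorm_const_smul, Real.enorm_eq_ofReal hpi.le, ENNReal.ofReal_mul hpi.le]
      gcongr
      refine (hα 1 one_pos).trans (ENNReal.ofReal_le_ofReal ?_)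
      have : (1 + 1 : ℝ) ^ (-γ) ≤ 1 :=
        Real.rpow_le_one_of_one_le_of_nonpos (by norm_num) (by linarith)
      nlinarith
    have htri := eLpNorm_add_le (μ := (volume : Measure (Euc n)))
      ((jap_meas α').smul (hF1.const_mul ((Real.pi : ℂ) * Complex.I))).aestronglyMeasurable
      ((jap_meas α').smul hPm).aestronglyMeasurable h1p
    calc _ ≤ _ := le_of_eq (by congr 1; ext η; simp [mul_add])
      _ ≤ _ := htri
      _ ≤ _ := add_le_add h1 hP
      _ = _ := by
        conv_lhs => rw [← ENNReal.ofReal_toReal hWt]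
        rw [← ENNReal.ofReal_mul ENNReal.toReal_nonneg,
          ← ENNReal.ofReal_add (by positivity) (by positivity)]
        congr 1; ring
end
end
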